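/- Let β ~ N(0, Σ_T) be independent of n i.i.d. pairs (x_j, ε_j) with x_j ~ N(0, Σ_F), ε_j ~ N(0, σ²), and y_j = x_jᵀβ + ε_j. With b̂ = n^{−1} Σ_j y_j x_j, one has E[b̂ b̂ᵀ] = Σ_F Σ_T Σ_F + n^{−1}(Σ_F Σ_T Σ_F + tr(Σ_T Σ_F) Σ_F + σ² Σ_F). -/

import Mathlib

open Matrix MeasureTheory ProbabilityTheory
open scoped NNReal

def ALp {Ω : Type*} [MeasurableSpace Ω] (μ : Measure Ω) (f : Ω → ℝ) : Prop :=
  ∀ p : ENNReal, p ≠ ⊤ → MemLp f p μ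

section
variable {Ω Ω' : Type*} [MeasurableSpace Ω] [MeasurableSpace Ω'] {μ : Measure Ω} {ν : Measure Ω'}

lemma ALp.int {f : Ω → ℝ} (h : ALp μ f) : Integrable f μ :=
  memLp_one_iff_integrable.1 (h 1 (by simp))

lemma ALp.add {f g : Ω → ℝ} (hf : ALp μ f) (hg : ALp μ g) : ALp μ (fun x => f x + g x) :=
  fun p hp => (hf p hp).add (hg p hp)

lemma iadd {f g : Ω → ℝ} (hf : Integrable f μ) (hg : Integrable g μ) :
    Integrable (fun x => f x + g x) μ := hf.add hg

lemma ALp.mul {f g : Ω → ℝ} (hf : ALp μ f) (hg : ALp μ g) : ALp μ (fun x => f x * g x) := by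
  intro p hp
  have h2 : 2 * p ≠ ⊤ := ENNReal.mul_ne_top (by simp) hp
  have : ENNReal.HolderTriple (2 * p) (2 * p) p := ⟨by
    rw [ENNReal.mul_inv (by simp) (by simp), ← add_mul, ENNReal.inv_two_add_inv_two, one_mul]⟩
  exact MemLp.mul' (hg _ h2) (hf _ h2)

lemma ALp.const [IsFiniteMeasure μ] (c : ℝ) : ALp μ (fun _ => c) :=
  fun _ _ => memLp_const c

lemma ALp.sum {ι : Type*} (s : Finset ι) {f : ι → Ω → ℝ} (hf : ∀ i, ALp μ (f i)) :
    ALp μ (fun x => ∑ i ∈ s, f i x) :=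
  fun p hp => memLp_finsetSum _ (fun i _ => hf i p hp)

lemma ALp.comp {f : Ω' → ℝ} (hf : ALp ν f) {g : Ω → Ω'} (hg : MeasurePreserving g μ ν) :
    ALp μ (fun x => f (g x)) :=
  fun p hp => (hf p hp).comp_measurePreserving hg

lemma ALp.gauss (v : ℝ≥0) : ALp (gaussianReal 0 v) (fun x => x) :=
  fun p hp => memLp_id_gaussianReal' p hp
end

noncomputable abbrev gam (d : ℕ) : Measure (Fin d → ℝ) := Measure.pi fun _ : Fin d => gaussianReal 0 1

lemma ALp.dot {d : ℕ} (v : Fin d → ℝ) : ALp (gam d) (fun z => v ⬝ᵥ z) := by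
  unfold dotProduct
  exact ALp.sum _ fun i => (ALp.const _).mul
    ((ALp.gauss 1).comp (measurePreserving_eval (fun _ : Fin d => gaussianReal 0 1) i))

lemma mgf_dot {d : ℕ} (v : Fin d → ℝ) :
    mgf (fun z => v ⬝ᵥ z) (gam d) = fun t => Real.exp ((v ⬝ᵥ v) * t ^ 2 / 2) := by
  ext t
  have h1 : ∀ z : Fin d → ℝ, Real.exp (t * (v ⬝ᵥ z)) = ∏ i, Real.exp ((t * v i) * z i) := by
    intro z
    rw [← Real.exp_sum, dotProduct, Finset.mul_sum]
    simp only [mul_assoc]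
  simp only [mgf, h1]
  rw [integral_fintype_prod_eq_prod (fun i x => Real.exp ((t * v i) * x))]
  have h2 : ∀ c : ℝ, ∫ x, Real.exp (c * x) ∂(gaussianReal 0 1) = Real.exp (c ^ 2 / 2) := by
    intro c
    have := congrFun (mgf_fun_id_gaussianReal (μ := 0) (v := 1)) c
    simpa [mgf] using this
  simp only [h2]
  rw [← Real.exp_sum, dotProduct, Finset.sum_mul, Finset.sum_div]
  congr 1
  refine Finset.sum_congr rfl fun i _ => by ring

lemma exp_dot_int {d : ℕ} (v : Fin d → ℝ) :
    integrableExpSet (fun z => v ⬝ᵥ z) (gam d) = Set.univ := by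
  ext t
  simp only [integrableExpSet, Set.mem_ofPred_eq, Set.mem_univ, iff_true]
  have h1 : ∀ z : Fin d → ℝ, Real.exp (t * (v ⬝ᵥ z)) = ∏ i, Real.exp ((t * v i) * z i) := by
    intro z
    rw [← Real.exp_sum, dotProduct, Finset.mul_sum]
    simp only [mul_assoc]
  simp only [h1]
  exact Integrable.fintype_prod (f := fun i x => Real.exp ((t * v i) * x))
    fun i => integrable_exp_mul_gaussianReal _

lemma iter_exp (c : ℝ) : iteratedDeriv 2 (fun t : ℝ => Real.exp (c * t ^ 2 / 2)) 0 = c ∧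
    iteratedDeriv 4 (fun t : ℝ => Real.exp (c * t ^ 2 / 2)) 0 = 3 * c ^ 2 := by
  have e : ∀ t : ℝ, HasDerivAt (fun t : ℝ => Real.exp (c * t ^ 2 / 2))
      (Real.exp (c * t ^ 2 / 2) * (c * t)) t := by
    intro t
    convert! (((hasDerivAt_pow 2 t).const_mul c).div_const 2).exp using 1
    simp; ring
  have d1 : deriv (fun t : ℝ => Real.exp (c * t ^ 2 / 2)) =
      fun t => Real.exp (c * t ^ 2 / 2) * (c * t) := funext fun t => (e t).deriv
  have d2 : deriv (fun t : ℝ => Real.exp (c * t ^ 2 / 2) * (c * t)) =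
      fun t => Real.exp (c * t ^ 2 / 2) * (c ^ 2 * t ^ 2 + c) := by
    ext t
    rw [((e t).fun_mul ((hasDerivAt_id' t).const_mul c)).deriv]; ring
  have d3 : deriv (fun t : ℝ => Real.exp (c * t ^ 2 / 2) * (c ^ 2 * t ^ 2 + c)) =
      fun t => Real.exp (c * t ^ 2 / 2) * (c ^ 3 * t ^ 3 + 3 * c ^ 2 * t) := by
    ext t
    rw [((e t).fun_mul (((hasDerivAt_pow 2 t).const_mul (c ^ 2)).add_const c)).deriv]
    push_cast; ring
  have d4 : deriv (fun t : ℝ => Real.exp (c * t ^ 2 / 2) * (c ^ 3 * t ^ 3 + 3 * c ^ 2 * t)) 0 =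
      3 * c ^ 2 := by
    rw [((e 0).fun_mul (((hasDerivAt_pow 3 (0 : ℝ)).const_mul (c ^ 3)).fun_add
      ((hasDerivAt_id' (0 : ℝ)).const_mul (3 * c ^ 2)))).deriv]
    simp
  constructor
  · simp [iteratedDeriv_succ, iteratedDeriv_zero, d1, d2]
  · rw [iteratedDeriv_succ, iteratedDeriv_succ, iteratedDeriv_succ, iteratedDeriv_one, d1, d2, d3, d4]

lemma dot_pow {d : ℕ} (v : Fin d → ℝ) : ∫ z, (v ⬝ᵥ z) ^ 2 ∂(gam d) = v ⬝ᵥ v ∧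
    ∫ z, (v ⬝ᵥ z) ^ 4 ∂(gam d) = 3 * (v ⬝ᵥ v) ^ 2 := by
  have h := fun n => iteratedDeriv_mgf_zero (X := fun z => v ⬝ᵥ z) (μ := gam d)
    (by rw [exp_dot_int]; simp) n
  rw [mgf_dot] at h
  have h2 := h 2
  have h4 := h 4
  rw [(iter_exp _).1] at h2
  rw [(iter_exp _).2] at h4
  exact ⟨h2.symm, h4.symm⟩

lemma dot_two {d : ℕ} (v w : Fin d → ℝ) :
    ∫ z, (v ⬝ᵥ z) * (w ⬝ᵥ z) ∂(gam d) = v ⬝ᵥ w := by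
  have h := (dot_pow (v + w)).1
  have e : ∀ z : Fin d → ℝ, ((v + w) ⬝ᵥ z) ^ 2 =
      (v ⬝ᵥ z) ^ 2 + 2 * ((v ⬝ᵥ z) * (w ⬝ᵥ z)) + (w ⬝ᵥ z) ^ 2 := by
    intro z; rw [add_dotProduct]; ring
  have i1 : ∀ v w : Fin d → ℝ, Integrable (fun z => (v ⬝ᵥ z) * (w ⬝ᵥ z)) (gam d) :=
    fun v w => ((ALp.dot v).mul (ALp.dot w)).int
  have i2 : ∀ v : Fin d → ℝ, Integrable (fun z => (v ⬝ᵥ z) ^ 2) (gam d) := by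
    intro v; simpa only [pow_two] using i1 v v
  simp only [e] at h
  rw [integral_add (iadd (i2 _) ((i1 _ _).const_mul 2)) (i2 _),
    integral_add (i2 _) ((i1 _ _).const_mul 2), integral_const_mul,
    (dot_pow v).1, (dot_pow w).1] at h
  simp only [add_dotProduct, dotProduct_add, dotProduct_comm w v] at h
  linarith

lemma dot_sq_sq {d : ℕ} (v w : Fin d → ℝ) :
    ∫ z, (v ⬝ᵥ z) * (v ⬝ᵥ z) * ((w ⬝ᵥ z) * (w ⬝ᵥ z)) ∂(gam d) =
      (v ⬝ᵥ v) * (w ⬝ᵥ w) + 2 * (v ⬝ᵥ w) ^ 2 := by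
  have h := (dot_pow (v + w)).2
  have h' := (dot_pow (v - w)).2
  have i1 : Integrable (fun z => (v ⬝ᵥ z) * (v ⬝ᵥ z) * ((w ⬝ᵥ z) * (w ⬝ᵥ z))) (gam d) :=
    (((ALp.dot v).mul (ALp.dot v)).mul ((ALp.dot w).mul (ALp.dot w))).int
  have i4 : ∀ v : Fin d → ℝ, Integrable (fun z => (v ⬝ᵥ z) ^ 4) (gam d) := by
    intro v
    have := (((ALp.dot v).mul (ALp.dot v)).mul ((ALp.dot v).mul (ALp.dot v))).int
    refine this.congr (Filter.Eventually.of_forall fun z => ?_)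
    simp only; ring
  have e : ∫ z, ((v + w) ⬝ᵥ z) ^ 4 + ((v - w) ⬝ᵥ z) ^ 4 ∂(gam d) =
      ∫ z, (2 * (v ⬝ᵥ z) ^ 4 + 12 * ((v ⬝ᵥ z) * (v ⬝ᵥ z) * ((w ⬝ᵥ z) * (w ⬝ᵥ z)))) +
        2 * (w ⬝ᵥ z) ^ 4 ∂(gam d) := by
    congr 1; ext z; rw [add_dotProduct, sub_dotProduct]; ring
  rw [integral_add (i4 _) (i4 _), integral_add (iadd ((i4 _).const_mul 2) (i1.const_mul 12))
    ((i4 _).const_mul 2), integral_add ((i4 _).const_mul 2) (i1.const_mul 12),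
    integral_const_mul, integral_const_mul, integral_const_mul, h, h', (dot_pow v).2,
    (dot_pow w).2] at e
  simp only [add_dotProduct, dotProduct_add, sub_dotProduct, dotProduct_sub,
    dotProduct_comm w v] at e
  linarith

lemma dot_four {d : ℕ} (v q r : Fin d → ℝ) :
    ∫ z, ((v ⬝ᵥ z) * (q ⬝ᵥ z)) * ((v ⬝ᵥ z) * (r ⬝ᵥ z)) ∂(gam d) =
      (v ⬝ᵥ v) * (q ⬝ᵥ r) + 2 * (v ⬝ᵥ q) * (v ⬝ᵥ r) := by
  have i1 : ∀ a b : Fin d → ℝ,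
      Integrable (fun z => (v ⬝ᵥ z) * (v ⬝ᵥ z) * ((a ⬝ᵥ z) * (b ⬝ᵥ z))) (gam d) := fun a b =>
    (((ALp.dot v).mul (ALp.dot v)).mul ((ALp.dot a).mul (ALp.dot b))).int
  have e : ∀ z : Fin d → ℝ, ((v ⬝ᵥ z) * (q ⬝ᵥ z)) * ((v ⬝ᵥ z) * (r ⬝ᵥ z)) =
      (1 / 4) * ((v ⬝ᵥ z) * (v ⬝ᵥ z) * (((q + r) ⬝ᵥ z) * ((q + r) ⬝ᵥ z)) -
        (v ⬝ᵥ z) * (v ⬝ᵥ z) * (((q - r) ⬝ᵥ z) * ((q - r) ⬝ᵥ z))) := by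
    intro z; rw [add_dotProduct, sub_dotProduct]; ring
  simp only [e]
  rw [integral_const_mul, integral_sub (i1 _ _) (i1 _ _), dot_sq_sq, dot_sq_sq]
  simp only [add_dotProduct, dotProduct_add, sub_dotProduct, dotProduct_sub,
    dotProduct_comm r q]
  ring

lemma pi_two {n : ℕ} {X : Type*} [MeasurableSpace X] (μ : Measure X) [IsProbabilityMeasure μ]
    (G H : X → ℝ) (hG : AEStronglyMeasurable G μ) (hH : AEStronglyMeasurable H μ) (j l : Fin n) :
    ∫ z, G (z j) * H (z l) ∂(Measure.pi fun _ : Fin n => μ) =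
      if j = l then ∫ x, G x * H x ∂μ else (∫ x, G x ∂μ) * ∫ x, H x ∂μ := by
  have key : ∀ (F : X → ℝ) (_ : AEStronglyMeasurable F μ) (j : Fin n),
      ∫ z, F (z j) ∂(Measure.pi fun _ : Fin n => μ) = ∫ x, F x ∂μ := by
    intro F hF j
    have m := measurePreserving_eval (fun _ : Fin n => μ) j
    have h := integral_map (f := F) m.measurable.aemeasurable (by rw [m.map_eq]; exact hF)
    rw [m.map_eq] at h
    exact h.symm
  split_ifs with h
  · subst h
    exact key (fun x => G x * H x) (hG.mul hH) j
  · have ind : iIndepFun (fun (i : Fin n) (z : Fin n → X) => z i) (Measure.pi fun _ : Fin n => μ) :=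
      iIndepFun_pi (X := fun _ x => x) (fun _ => aemeasurable_id)
    have i2 := ind.indepFun h
    have mj := measurePreserving_eval (fun _ : Fin n => μ) j
    have ml := measurePreserving_eval (fun _ : Fin n => μ) l
    have := i2.integral_fun_comp_mul_comp (f := G) (g := H) mj.measurable.aemeasurable
      ml.measurable.aemeasurable (by erw [mj.map_eq]; exact hG) (by erw [ml.map_eq]; exact hH)
    rw [this, key G hG, key H hH]

lemma gauss_sq (v : ℝ≥0) : ∫ x, x * x ∂(gaussianReal 0 v) = v := by
  have h := variance_fun_id_gaussianReal (μ := 0) (v := v)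
  rw [variance_eq_integral (by fun_prop)] at h
  simpa [integral_id_gaussianReal, pow_two] using h

lemma sum_ite_two {n : ℕ} (A B : ℝ) :
    ∑ j : Fin n, ∑ l : Fin n, (if j = l then A else B) = n * A + n * (n - 1) * B := by
  have : ∀ j l : Fin n, (if j = l then A else B) = B + if j = l then A - B else 0 := by
    intro j l; split_ifs <;> ring
  simp only [this, Finset.sum_add_distrib]
  simp
  ring

lemma inner_int {d n : ℕ} (hn : 0 < n) (σ : ℝ≥0) (v q r : Fin d → ℝ) :
    ∫ ω : (Fin n → Fin d → ℝ) × (Fin n → ℝ),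
      ((n : ℝ)⁻¹ * ∑ j, (v ⬝ᵥ ω.1 j + ω.2 j) * (q ⬝ᵥ ω.1 j)) *
      ((n : ℝ)⁻¹ * ∑ j, (v ⬝ᵥ ω.1 j + ω.2 j) * (r ⬝ᵥ ω.1 j))
      ∂((Measure.pi fun _ : Fin n => gam d).prod
              (Measure.pi fun _ : Fin n => gaussianReal 0 (σ ^ 2))) =
    (v ⬝ᵥ q) * (v ⬝ᵥ r) + (n : ℝ)⁻¹ * ((v ⬝ᵥ q) * (v ⬝ᵥ r) + (v ⬝ᵥ v) * (q ⬝ᵥ r)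
      + (σ : ℝ) ^ 2 * (q ⬝ᵥ r)) := by
  set PZ := (Measure.pi fun _ : Fin n => gam d) with hPZ
  set PE := (Measure.pi fun _ : Fin n => gaussianReal 0 (σ ^ 2)) with hPE
  have aE : ∀ j, ALp PE (fun e => e j) := fun j =>
    (ALp.gauss (σ ^ 2)).comp (measurePreserving_eval (fun _ : Fin n => gaussianReal 0 (σ ^ 2)) j)
  have aZ : ∀ (a : Fin d → ℝ) j, ALp PZ (fun z => a ⬝ᵥ z j) := fun a j =>
    (ALp.dot a).comp (measurePreserving_eval (fun _ : Fin n => gam d) j)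
  have m1 : MeasurePreserving Prod.fst (PZ.prod PE) PZ := measurePreserving_fst
  have m2 : MeasurePreserving Prod.snd (PZ.prod PE) PE := measurePreserving_snd
  let f1 : Fin n → Fin n → (Fin n → Fin d → ℝ) → ℝ := fun j l z =>
    ((v ⬝ᵥ z j) * (q ⬝ᵥ z j)) * ((v ⬝ᵥ z l) * (r ⬝ᵥ z l))
  let f2 : Fin n → Fin n → (Fin n → Fin d → ℝ) → ℝ := fun j l z =>
    ((v ⬝ᵥ z j) * (q ⬝ᵥ z j)) * (r ⬝ᵥ z l)
  let f3 : Fin n → Fin n → (Fin n → Fin d → ℝ) → ℝ := fun j l z =>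
    (q ⬝ᵥ z j) * ((v ⬝ᵥ z l) * (r ⬝ᵥ z l))
  let f4 : Fin n → Fin n → (Fin n → Fin d → ℝ) → ℝ := fun j l z =>
    (q ⬝ᵥ z j) * (r ⬝ᵥ z l)
  have a1 : ∀ j l, ALp PZ (f1 j l) := fun j l =>
    ((aZ v j).mul (aZ q j)).mul ((aZ v l).mul (aZ r l))
  have a2 : ∀ j l, ALp PZ (f2 j l) := fun j l => ((aZ v j).mul (aZ q j)).mul (aZ r l)
  have a3 : ∀ j l, ALp PZ (f3 j l) := fun j l => (aZ q j).mul ((aZ v l).mul (aZ r l))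
  have a4 : ∀ j l, ALp PZ (f4 j l) := fun j l => (aZ q j).mul (aZ r l)
  have expand : ∀ ω : (Fin n → Fin d → ℝ) × (Fin n → ℝ),
      ((n : ℝ)⁻¹ * ∑ j, (v ⬝ᵥ ω.1 j + ω.2 j) * (q ⬝ᵥ ω.1 j)) *
      ((n : ℝ)⁻¹ * ∑ j, (v ⬝ᵥ ω.1 j + ω.2 j) * (r ⬝ᵥ ω.1 j)) =
      (n : ℝ)⁻¹ ^ 2 * ∑ j, ∑ l, (f1 j l ω.1 + f2 j l ω.1 * ω.2 l + f3 j l ω.1 * ω.2 j +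
        f4 j l ω.1 * (ω.2 j * ω.2 l)) := by
    intro ω
    rw [mul_mul_mul_comm, Finset.sum_mul_sum, ← pow_two]
    congr 1
    refine Finset.sum_congr rfl fun j _ => Finset.sum_congr rfl fun l _ => ?_
    simp only [f1, f2, f3, f4]
    ring
  have I1 : ∀ j l, ALp (PZ.prod PE) (fun ω => f1 j l ω.1) := fun j l => (a1 j l).comp m1
  have I2 : ∀ j l, ALp (PZ.prod PE) (fun ω => f2 j l ω.1 * ω.2 l) := fun j l =>
    ((a2 j l).comp m1).mul ((aE l).comp m2)
  have I3 : ∀ j l, ALp (PZ.prod PE) (fun ω => f3 j l ω.1 * ω.2 j) := fun j l =>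
    ((a3 j l).comp m1).mul ((aE j).comp m2)
  have I4 : ∀ j l, ALp (PZ.prod PE) (fun ω => f4 j l ω.1 * (ω.2 j * ω.2 l)) := fun j l =>
    ((a4 j l).comp m1).mul (((aE j).comp m2).mul ((aE l).comp m2))
  have I : ∀ j l, ALp (PZ.prod PE) (fun ω => f1 j l ω.1 + f2 j l ω.1 * ω.2 l +
      f3 j l ω.1 * ω.2 j + f4 j l ω.1 * (ω.2 j * ω.2 l)) := fun j l =>
    (((I1 j l).add (I2 j l)).add (I3 j l)).add (I4 j l)
  have eE : ∀ j, ∫ e, e j ∂PE = 0 := by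
    intro j
    have := pi_two (gaussianReal 0 (σ ^ 2)) (fun x => x) (fun _ => 1)
      (ALp.gauss _).int.aestronglyMeasurable aestronglyMeasurable_const j j
    simpa [integral_id_gaussianReal] using this
  have eEE : ∀ j l, ∫ e, e j * e l ∂PE = if j = l then (σ : ℝ) ^ 2 else 0 := by
    intro j l
    have := pi_two (gaussianReal 0 (σ ^ 2)) (fun x => x) (fun x => x)
      (ALp.gauss _).int.aestronglyMeasurable (ALp.gauss _).int.aestronglyMeasurable j l
    simpa [integral_id_gaussianReal, gauss_sq] using this
  have e1 : ∀ j l, ∫ z, f1 j l z ∂PZ = if j = l then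
      (v ⬝ᵥ v) * (q ⬝ᵥ r) + 2 * (v ⬝ᵥ q) * (v ⬝ᵥ r) else (v ⬝ᵥ q) * (v ⬝ᵥ r) := by
    intro j l
    rw [← dot_four, ← dot_two v q, ← dot_two v r]
    exact pi_two (gam d) (fun x => (v ⬝ᵥ x) * (q ⬝ᵥ x)) (fun x => (v ⬝ᵥ x) * (r ⬝ᵥ x))
      ((ALp.dot v).mul (ALp.dot q)).int.aestronglyMeasurable
      ((ALp.dot v).mul (ALp.dot r)).int.aestronglyMeasurable j l
  have e4 : ∀ j, ∫ z, f4 j j z ∂PZ = q ⬝ᵥ r := by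
    intro j
    have := pi_two (gam d) (fun x => q ⬝ᵥ x) (fun x => r ⬝ᵥ x)
      (ALp.dot q).int.aestronglyMeasurable (ALp.dot r).int.aestronglyMeasurable j j
    rw [if_pos rfl, dot_two] at this
    exact this
  have tot : ∀ j l, ∫ ω, (f1 j l ω.1 + f2 j l ω.1 * ω.2 l +
      f3 j l ω.1 * ω.2 j + f4 j l ω.1 * (ω.2 j * ω.2 l)) ∂(PZ.prod PE) =
      if j = l then (v ⬝ᵥ v) * (q ⬝ᵥ r) + 2 * (v ⬝ᵥ q) * (v ⬝ᵥ r) + (σ : ℝ) ^ 2 * (q ⬝ᵥ r)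
        else (v ⬝ᵥ q) * (v ⬝ᵥ r) := by
    intro j l
    rw [integral_add (((I1 j l).add (I2 j l)).add (I3 j l)).int (I4 j l).int,
      integral_add ((I1 j l).add (I2 j l)).int (I3 j l).int,
      integral_add (I1 j l).int (I2 j l).int,
      integral_prod_mul (f2 j l) (fun e : Fin n → ℝ => e l),
      integral_prod_mul (f3 j l) (fun e : Fin n → ℝ => e j),
      integral_prod_mul (f4 j l) (fun e : Fin n → ℝ => e j * e l), eE, eE, eEE,
      integral_fun_fst (f1 j l), e1]
    split_ifs with h
    · subst h
      rw [e4]; simp; ring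
    · simp
  simp only [expand]
  rw [integral_const_mul, integral_finsetSum _ fun j _ => (ALp.sum _ fun l => I j l).int]
  simp only [integral_finsetSum Finset.univ fun l _ => (I _ l).int, tot]
  rw [sum_ite_two]
  have : (n : ℝ) ≠ 0 := by exact_mod_cast hn.ne'
  field_simp
  ring

/-- With a random task `β ~ N(0, Σ_T)` (`β = T w`, `Σ_T = T * T`) independent of the
i.i.d. data `x_j ~ N(0, Σ_F)` (`x_j = S z_j`, `Σ_F = S * S`), `ε_j ~ N(0, σ²)`,
`y_j = x_jᵀ β + ε_j`, the estimator `b̂ = n⁻¹ ∑_j y_j x_j` satisfies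
`E[b̂ b̂ᵀ] = Σ_F Σ_T Σ_F + n⁻¹ (Σ_F Σ_T Σ_F + tr(Σ_T Σ_F) Σ_F + σ² Σ_F)`. -/
theorem mom_single_task_second_moment
    {d n : ℕ} (hn : 0 < n)
    (S T : Matrix (Fin d) (Fin d) ℝ) (hS : Sᵀ = S) (hT : Tᵀ = T) (σ : ℝ≥0) :
    ∀ i k : Fin d,
      (∫ ω : (Fin d → ℝ) × (Fin n → Fin d → ℝ) × (Fin n → ℝ),
          (let β := T.mulVec ω.1
           ((n : ℝ)⁻¹ * ∑ j, (β ⬝ᵥ S.mulVec (ω.2.1 j) + ω.2.2 j) * (S.mulVec (ω.2.1 j)) i) *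
           ((n : ℝ)⁻¹ * ∑ j, (β ⬝ᵥ S.mulVec (ω.2.1 j) + ω.2.2 j) * (S.mulVec (ω.2.1 j)) k))
          ∂((Measure.pi fun _ : Fin d => gaussianReal 0 1).prod
             ((Measure.pi fun _ : Fin n => Measure.pi fun _ : Fin d => gaussianReal 0 1).prod
              (Measure.pi fun _ : Fin n => gaussianReal 0 (σ ^ 2))))) =
        ((S * S) * (T * T) * (S * S) +
          (n : ℝ)⁻¹ •
            ((S * S) * (T * T) * (S * S) +
              ((T * T) * (S * S)).trace • (S * S) + ((σ : ℝ) ^ 2) • (S * S))) i k := by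
  intro i k
  have hβ : ∀ (w : Fin d → ℝ) (z : Fin d → ℝ),
      T.mulVec w ⬝ᵥ S.mulVec z = (S * T).mulVec w ⬝ᵥ z := by
    intro w z
    rw [← Matrix.mulVec_mulVec, Matrix.dotProduct_mulVec, ← Matrix.mulVec_transpose, hS]
  have hi : ∀ (a : Fin d) (z : Fin d → ℝ), S.mulVec z a = S a ⬝ᵥ z := fun _ _ => rfl
  simp only [hβ]
  simp only [hi]
  have hw : ∀ (w a : Fin d → ℝ), (S * T).mulVec w ⬝ᵥ a = (T * S).mulVec a ⬝ᵥ w := by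
    intro w a
    rw [dotProduct_comm, Matrix.dotProduct_mulVec, ← Matrix.mulVec_transpose,
      Matrix.transpose_mul, hS, hT]
  have hfull : Integrable (fun ω : (Fin d → ℝ) × (Fin n → Fin d → ℝ) × (Fin n → ℝ) =>
      ((n : ℝ)⁻¹ * ∑ j, ((S * T).mulVec ω.1 ⬝ᵥ ω.2.1 j + ω.2.2 j) * (S i ⬝ᵥ ω.2.1 j)) *
      ((n : ℝ)⁻¹ * ∑ j, ((S * T).mulVec ω.1 ⬝ᵥ ω.2.1 j + ω.2.2 j) * (S k ⬝ᵥ ω.2.1 j)))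
      ((gam d).prod ((Measure.pi fun _ : Fin n => gam d).prod
              (Measure.pi fun _ : Fin n => gaussianReal 0 (σ ^ 2)))) := by
    set PZ := (Measure.pi fun _ : Fin n => gam d) with hPZ
    set PE := (Measure.pi fun _ : Fin n => gaussianReal 0 (σ ^ 2)) with hPE
    have m1 : MeasurePreserving Prod.fst ((gam d).prod (PZ.prod PE)) (gam d) :=
      measurePreserving_fst
    have m2 : MeasurePreserving Prod.snd ((gam d).prod (PZ.prod PE)) (PZ.prod PE) :=
      measurePreserving_snd
    have m3 : MeasurePreserving Prod.fst (PZ.prod PE) PZ := measurePreserving_fst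
    have m4 : MeasurePreserving Prod.snd (PZ.prod PE) PE := measurePreserving_snd
    have aE : ∀ j, ALp ((gam d).prod (PZ.prod PE)) (fun ω => ω.2.2 j) := fun j =>
      (((ALp.gauss (σ ^ 2)).comp
        (measurePreserving_eval (fun _ : Fin n => gaussianReal 0 (σ ^ 2)) j)).comp m4).comp m2
    have aZ : ∀ (a : Fin d → ℝ) j, ALp ((gam d).prod (PZ.prod PE)) (fun ω => a ⬝ᵥ ω.2.1 j) :=
      fun a j => (((ALp.dot a).comp
        (measurePreserving_eval (fun _ : Fin n => gam d) j)).comp m3).comp m2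
    have aZ1 : ∀ (a : Fin d) j, ALp ((gam d).prod (PZ.prod PE)) (fun ω => ω.2.1 j a) := by
      intro a j
      simpa using aZ (Pi.single a 1) j
    have aW : ∀ j, ALp ((gam d).prod (PZ.prod PE))
        (fun ω => (S * T).mulVec ω.1 ⬝ᵥ ω.2.1 j) := by
      intro j
      exact ALp.sum _ fun a => ((ALp.dot ((S * T) a)).comp m1).mul (aZ1 a j)
    have aF : ∀ b : Fin d → ℝ, ALp ((gam d).prod (PZ.prod PE)) (fun ω =>
        (n : ℝ)⁻¹ * ∑ j, ((S * T).mulVec ω.1 ⬝ᵥ ω.2.1 j + ω.2.2 j) * (b ⬝ᵥ ω.2.1 j)) :=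
      fun b => (ALp.const _).mul (ALp.sum _ fun j => ((aW j).add (aE j)).mul (aZ b j))
    exact ((aF (S i)).mul (aF (S k))).int
  rw [integral_prod _ hfull]
  simp only [inner_int hn]
  have iv : ∀ a b : Fin d → ℝ, ALp (gam d) (fun w => (a ⬝ᵥ w) * (b ⬝ᵥ w)) := fun a b =>
    (ALp.dot a).mul (ALp.dot b)
  have hvv : ∀ w : Fin d → ℝ, (S * T).mulVec w ⬝ᵥ (S * T).mulVec w =
      ∑ a, ((S * T) a ⬝ᵥ w) * ((S * T) a ⬝ᵥ w) := fun w => rfl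
  simp only [hw _ (S i), hw _ (S k), hvv]
  have ivv : ALp (gam d) (fun w => ∑ a, ((S * T) a ⬝ᵥ w) * ((S * T) a ⬝ᵥ w)) :=
    ALp.sum _ fun a => iv _ _
  have c1 : ALp (gam d) (fun w => (∑ a, ((S * T) a ⬝ᵥ w) * ((S * T) a ⬝ᵥ w)) * (S i ⬝ᵥ S k)) :=
    ivv.mul (ALp.const _)
  have c2 := (iv ((T * S).mulVec (S i)) ((T * S).mulVec (S k))).add c1
  have c3 : ALp (gam d) (fun _ => (σ : ℝ) ^ 2 * (S i ⬝ᵥ S k)) := ALp.const _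
  rw [integral_add (iv _ _).int ((ALp.const _).mul (c2.add c3)).int, integral_const_mul,
    integral_add c2.int c3.int, integral_add (iv _ _).int c1.int, integral_mul_const,
    integral_finsetSum _ fun a _ => (iv ((S * T) a) ((S * T) a)).int]
  simp only [dot_two]
  have r0 : ∀ a b : Fin d, S a ⬝ᵥ S b = (S * S) a b := by
    intro a b
    rw [Matrix.mul_apply, dotProduct]
    refine Finset.sum_congr rfl fun c _ => ?_
    rw [← congrFun (congrFun hS c) b]; rfl
  have r1 : (T * S).mulVec (S i) ⬝ᵥ (T * S).mulVec (S k) =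
      ((S * S) * (T * T) * (S * S)) i k := by
    have h1 : ∀ a, (T * S).mulVec (S a) = (T * S * S).col a := by
      intro a
      ext b
      simp only [Matrix.mulVec, Matrix.col_apply, Matrix.mul_apply (M := T * S), dotProduct]
      refine Finset.sum_congr rfl fun c _ => ?_
      rw [← congrFun (congrFun hS c) a]; rfl
    have h2 : (S * S) * (T * T) * (S * S) = (T * S * S)ᵀ * (T * S * S) := by
      simp only [Matrix.transpose_mul, hS, hT, Matrix.mul_assoc]
    rw [h1, h1, h2, Matrix.mul_apply]; rfl
  have r2 : ∑ a, (S * T) a ⬝ᵥ (S * T) a = ((T * T) * (S * S)).trace := by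
    have : (T * T * (S * S)).trace = ((S * T) * (S * T)ᵀ).trace := by
      rw [Matrix.transpose_mul, hS, hT, ← Matrix.mul_assoc, Matrix.trace_mul_comm]
      simp only [Matrix.mul_assoc]
    rw [this]; rfl
  rw [r0, r1, r2]
  simp [Matrix.add_apply, Matrix.smul_apply]
  ring
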